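/- Rounding comparison: for every valid date D and every period p = (py, pm, pd), one has D +↓ p ≤ D +↑ p. -/

import Mathlib

/-- A value is either a date `(y, m, d)` (a triple of integers in the
Gregorian calendar) or the error element `⊥`. -/
inductive DValue : Type
  | date (y m d : ℤ) : DValue
  | bot : DValue
deriving DecidableEq

/-- `nb_days(y, m)`: the number of days of month `m` in year `y`
(meaningful for `1 ≤ m ≤ 12`). A year is leap iff it is divisible by 4
and not by 100, or divisible by 400. -/
def nbDays (y m : ℤ) : ℤ :=
  if m = 2 then (if (4 ∣ y ∧ ¬ (100 ∣ y)) ∨ 400 ∣ y then 29 else 28)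
  else if m = 4 ∨ m = 6 ∨ m = 9 ∨ m = 11 then 30
  else 31

theorem nbDays_bounds (y m : ℤ) : 28 ≤ nbDays y m ∧ nbDays y m ≤ 31 := by
  unfold nbDays; split_ifs <;> omega

/-- A date `(y, m, d)` is valid iff `1 ≤ m ≤ 12` and `1 ≤ d ≤ nb_days(y, m)`. -/
def ValidDate (y m d : ℤ) : Prop :=
  1 ≤ m ∧ m ≤ 12 ∧ 1 ≤ d ∧ d ≤ nbDays y m

/-- Year addition: `(y,m,d) +y n = (y+n,m,d)`; `⊥ +y n = ⊥`. -/
def DValue.addY : DValue → ℤ → DValue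
  | .date y m d, n => .date (y + n) m d
  | .bot, _ => .bot

/-- Month addition on a date `(y, m, d)` (with `⊥` for a month component
outside `[1,12]`):
`(y,m,d) +m n = (y,m+n,d)` if `1 ≤ m+n ≤ 12`,
`= (y+1,m,d) +m (n−12)` if `m+n > 12`, `= (y−1,m,d) +m (n+12)` if `m+n < 1`. -/
def addMonths (y m d n : ℤ) : DValue :=
  if _h : 1 ≤ m ∧ m ≤ 12 then
    if _h1 : 1 ≤ m + n ∧ m + n ≤ 12 then .date y (m + n) d
    else if _h2 : 12 < m + n then addMonths (y + 1) m d (n - 12)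
    else addMonths (y - 1) m d (n + 12)
  else .bot
termination_by (m + n - 12).toNat + (1 - (m + n)).toNat
decreasing_by all_goals omega

/-- Month addition on values: `⊥ +m n = ⊥`. -/
def DValue.addM : DValue → ℤ → DValue
  | .date y m d, n => addMonths y m d n
  | .bot, _ => .bot

/-- Day addition, following the rules:
for `(y,m,d)` with `1 ≤ d ≤ nb_days(y,m)`:
`(y,m,d) +d n = (y,m,d+n)` if `1 ≤ d+n ≤ nb_days(y,m)`;
`= ((y,m,1) +m 1) +d (n − (nb_days(y,m) − d) − 1)` if `d+n > nb_days(y,m)`;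
`= (y,m,1) +d (d−1+n)` if `d+n ≤ 0` and `d > 1`;
if `n+1 ≤ 0` then, letting `(y',m',d') = (y,m,1) +m (−1)`,
`(y,m,1) +d n = (y',m',1) +d (n + nb_days(y',m'))`.
If `d < 1` or `d > nb_days(y,m)` (or the month is out of range), the result is `⊥`. -/
def addDays (y m d n : ℤ) : DValue :=
  if _hm : 1 ≤ m ∧ m ≤ 12 then
    if _hd : 1 ≤ d ∧ d ≤ nbDays y m then
      if _h1 : 1 ≤ d + n ∧ d + n ≤ nbDays y m then .date y m (d + n)
      else if _h2 : nbDays y m < d + n then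
        match addMonths y m 1 1 with
        | .date y' m' _ => addDays y' m' 1 (n - (nbDays y m - d) - 1)
        | .bot => .bot
      else if _h3 : 1 < d then addDays y m 1 (d - 1 + n)
      else
        match _hprev : addMonths y m 1 (-1) with
        | .date y' m' _ => addDays y' m' 1 (n + nbDays y' m')
        | .bot => .bot
    else .bot
  else .bot
termination_by (if 0 ≤ n then n else 62 - n).toNat
decreasing_by
  · split_ifs <;> omega
  · split_ifs <;> omega
  · have h28 := nbDays_bounds y' m'
    split_ifs <;> omega

/-- Day addition on values: `⊥ +d n = ⊥`. -/
def DValue.addD : DValue → ℤ → DValue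
  | .date y m d, n => addDays y m d n
  | .bot, _ => .bot

/-- Rounding modes: down (`↓`), up (`↑`) and error (`⊥`). -/
inductive RMode : Type
  | down | up | err
deriving DecidableEq

/-- Rounding `rnd_r`: if `1 ≤ d ≤ nb_days(y,m)` then `rnd_r(y,m,d) = (y,m,d)`;
if `d > nb_days(y,m)` then `rnd_↓(y,m,d) = (y,m,nb_days(y,m))`,
`rnd_↑(y,m,d) = (y',m',1)` where `(y',m',d') = (y,m,d) +m 1`, and
`rnd_⊥(y,m,d) = ⊥`; if `d < 1` then `rnd_r(y,m,d) = ⊥`; `rnd_r(⊥) = ⊥`. -/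
def rnd (r : RMode) : DValue → DValue
  | .date y m d =>
    if 1 ≤ d ∧ d ≤ nbDays y m then .date y m d
    else if d < 1 then .bot
    else
      match r with
      | .down => .date y m (nbDays y m)
      | .up =>
        match addMonths y m d 1 with
        | .date y' m' _ => .date y' m' 1
        | .bot => .bot
      | .err => .bot
  | .bot => .bot

/-- A period `(py, pm, pd)`: a number of years, months and days. -/
structure Period : Type where
  py : ℤ
  pm : ℤ
  pd : ℤ
deriving DecidableEq

/-- Derived addition of a period with rounding mode `r`:
`e +r (py, pm, pd) = rnd_r((e +y py) +m pm) +d pd`. -/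
def addPeriod (r : RMode) (e : DValue) (p : Period) : DValue :=
  ((rnd r ((e.addY p.py).addM p.pm)).addD p.pd)

/-- Strict lexicographic order on dates. -/
def DateLt (y1 m1 d1 y2 m2 d2 : ℤ) : Prop :=
  y1 < y2 ∨ (y1 = y2 ∧ (m1 < m2 ∨ (m1 = m2 ∧ d1 < d2)))

/-- Large lexicographic order on dates. -/
def DateLe (y1 m1 d1 y2 m2 d2 : ℤ) : Prop :=
  y1 < y2 ∨ (y1 = y2 ∧ (m1 < m2 ∨ (m1 = m2 ∧ d1 ≤ d2)))

/-- Comparison lifted to values: it holds only between two dates. -/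
def DValue.lt : DValue → DValue → Prop
  | .date y1 m1 d1, .date y2 m2 d2 => DateLt y1 m1 d1 y2 m2 d2
  | _, _ => False

/-- Comparison lifted to values: it holds only between two dates. -/
def DValue.le : DValue → DValue → Prop
  | .date y1 m1 d1, .date y2 m2 d2 => DateLe y1 m1 d1 y2 m2 d2
  | _, _ => False

/-- A value is a valid date: it is not `⊥` and its components are valid. -/
def IsValidDate : DValue → Prop
  | .date y m d => ValidDate y m d
  | .bot => False

def yearOf : DValue → ℤ
  | .date y _ _ => y
  | .bot => 0

def monthOf : DValue → ℤ
  | .date _ m _ => m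
  | .bot => 0

def dayOf : DValue → ℤ
  | .date _ _ d => d
  | .bot => 0

/-- Date units: year, month, day. -/
inductive DUnit : Type
  | year | month | day
deriving DecidableEq

/-- Addition of `n` units to a value. -/
def addU : DUnit → DValue → ℤ → DValue
  | .year, v, n => v.addY n
  | .month, v, n => v.addM n
  | .day, v, n => v.addD n

/-- Componentwise addition of periods. -/
def Period.add (p q : Period) : Period :=
  ⟨p.py + q.py, p.pm + q.pm, p.pd + q.pd⟩

/-!
Number the days of the calendar consecutively. On valid dates this numbering is strictly increasing,
and adding `n` days translates it by `n`, so day addition is monotone. Comparing `D +↓ p` with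
`D +↑ p` thus reduces to comparing the two roundings of one date, which either coincide or are the
last day of a month and the first day of the next one.
-/

/-- The number of months from January of year `0` to month `m` of year `y`. It turns month
addition into addition of integers. -/
def monthIndex (y m : ℤ) : ℤ :=
  12 * y + (m - 1)

/-- The number of days from 1 March of year `0` to the first day of the month of index `k`.
Years are counted from March, so that the leap day comes last and the lengths 31, 30, 31, 30, 31,
31, 30, 31, 30, 31, 31 of the months before February have the partial sums `(153 * j + 2) / 5`.
Divisions round down, which makes the formula correct for negative years as well. -/
def monthStart (k : ℤ) : ℤ :=
  let y := (k - 2) / 12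
  let j := (k - 2) % 12
  365 * y + y / 4 - y / 100 + y / 400 + (153 * j + 2) / 5

/-- The position of the date `(y, m, d)` in the consecutive numbering of all days in which
1 March of year `0` has number `1`. -/
def dayNumber (y m d : ℤ) : ℤ :=
  monthStart (monthIndex y m) + d

theorem monthStart_monthIndex_add_one (y : ℤ) {m : ℤ} (hm : 1 ≤ m ∧ m ≤ 12) :
    monthStart (monthIndex y m + 1) = monthStart (monthIndex y m) + nbDays y m := by
  obtain ⟨hm1, hm12⟩ := hm
  simp only [monthStart, monthIndex, nbDays]
  interval_cases m <;> norm_num <;> (try split_ifs) <;> omega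

theorem exists_monthIndex_eq (k : ℤ) : ∃ y m, (1 ≤ m ∧ m ≤ 12) ∧ monthIndex y m = k :=
  ⟨k / 12, k % 12 + 1, by omega, by unfold monthIndex; omega⟩

theorem monthStart_monotone : Monotone monthStart := by
  refine monotone_int_of_le_succ fun k => ?_
  obtain ⟨y, m, hm, rfl⟩ := exists_monthIndex_eq k
  have := nbDays_bounds y m
  rw [monthStart_monthIndex_add_one y hm]
  omega

theorem ValidDate.dayNumber_lt {y m d y' m' d' : ℤ} (h : ValidDate y m d)
    (h' : ValidDate y' m' d') (hlt : DateLt y m d y' m' d') :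
    dayNumber y m d < dayNumber y' m' d' := by
  obtain ⟨hm1, hm12, -, hd⟩ := h
  obtain ⟨hm1', hm12', hd', -⟩ := h'
  have lt_of_month_lt (hidx : monthIndex y m < monthIndex y' m') :
      dayNumber y m d < dayNumber y' m' d' :=
    calc monthStart (monthIndex y m) + d
      _ ≤ monthStart (monthIndex y m) + nbDays y m := by gcongr
      _ = monthStart (monthIndex y m + 1) := (monthStart_monthIndex_add_one y ⟨hm1, hm12⟩).symm
      _ ≤ monthStart (monthIndex y' m') := monthStart_monotone hidx
      _ < monthStart (monthIndex y' m') + d' := by omega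
  rcases hlt with hy | ⟨rfl, hm | ⟨rfl, hd⟩⟩
  · exact lt_of_month_lt (by unfold monthIndex; omega)
  · exact lt_of_month_lt (by unfold monthIndex; omega)
  · unfold dayNumber; omega

theorem ValidDate.dateLe_iff_dayNumber_le {y m d y' m' d' : ℤ} (h : ValidDate y m d)
    (h' : ValidDate y' m' d') :
    DateLe y m d y' m' d' ↔ dayNumber y m d ≤ dayNumber y' m' d' := by
  constructor
  · intro hle
    have hlt_or_eq : DateLt y m d y' m' d' ∨ (y = y' ∧ m = m' ∧ d = d') := by
      unfold DateLe at hle; unfold DateLt; omega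
    rcases hlt_or_eq with hlt | ⟨rfl, rfl, rfl⟩
    · exact (h.dayNumber_lt h' hlt).le
    · exact le_rfl
  · contrapose!
    intro hnle
    exact h'.dayNumber_lt h (by unfold DateLe at hnle; unfold DateLt; omega)

theorem exists_addMonths_eq (y : ℤ) {m : ℤ} (d n : ℤ) (hm : 1 ≤ m ∧ m ≤ 12) :
    ∃ y' m', addMonths y m d n = .date y' m' d ∧ (1 ≤ m' ∧ m' ≤ 12) ∧
      monthIndex y' m' = monthIndex y m + n := by
  fun_induction addMonths y m d n with
  | case1 y n _ hmn => exact ⟨y, m + n, rfl, hmn, by unfold monthIndex; ring⟩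
  | case2 y n _ _ _ ih =>
    obtain ⟨y', m', heq, hm', hidx⟩ := ih
    exact ⟨y', m', heq, hm', by unfold monthIndex at *; omega⟩
  | case3 y n _ _ _ ih =>
    obtain ⟨y', m', heq, hm', hidx⟩ := ih
    exact ⟨y', m', heq, hm', by unfold monthIndex at *; omega⟩
  | case4 y n hm' => exact absurd hm hm'

theorem validDate_first (y : ℤ) {m : ℤ} (hm : 1 ≤ m ∧ m ≤ 12) : ValidDate y m 1 :=
  ⟨hm.1, hm.2, le_rfl, by linarith [nbDays_bounds y m]⟩

theorem validDate_last (y : ℤ) {m : ℤ} (hm : 1 ≤ m ∧ m ≤ 12) : ValidDate y m (nbDays y m) :=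
  ⟨hm.1, hm.2, by linarith [nbDays_bounds y m], le_rfl⟩

theorem exists_addMonths_one_eq (y : ℤ) {m : ℤ} (d : ℤ) (hm : 1 ≤ m ∧ m ≤ 12) :
    ∃ y' m', addMonths y m d 1 = .date y' m' d ∧ ValidDate y' m' 1 ∧
      dayNumber y' m' 1 = dayNumber y m (nbDays y m) + 1 := by
  obtain ⟨y', m', heq, hm', hidx⟩ := exists_addMonths_eq y d 1 hm
  refine ⟨y', m', heq, validDate_first y' hm', ?_⟩
  rw [dayNumber, dayNumber, hidx, monthStart_monthIndex_add_one y hm]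

theorem exists_addMonths_neg_one_eq (y : ℤ) {m : ℤ} (d : ℤ) (hm : 1 ≤ m ∧ m ≤ 12) :
    ∃ y' m', addMonths y m d (-1) = .date y' m' d ∧ ValidDate y' m' 1 ∧
      dayNumber y m 1 = dayNumber y' m' (nbDays y' m') + 1 := by
  obtain ⟨y', m', heq, hm', hidx⟩ := exists_addMonths_eq y d (-1) hm
  have hidx_succ : monthIndex y m = monthIndex y' m' + 1 := by omega
  refine ⟨y', m', heq, validDate_first y' hm', ?_⟩
  rw [dayNumber, dayNumber, hidx_succ, monthStart_monthIndex_add_one y' hm']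

/-- The value `v` is a valid date, and `k` is its day number. -/
def DValue.HasDayNumber (v : DValue) (k : ℤ) : Prop :=
  match v with
  | .date y m d => ValidDate y m d ∧ dayNumber y m d = k
  | .bot => False

theorem DValue.HasDayNumber.le_iff {v w : DValue} {k l : ℤ} (hv : v.HasDayNumber k)
    (hw : w.HasDayNumber l) : v.le w ↔ k ≤ l := by
  match v, w, k, l, hv, hw with
  | .date .., .date .., _, _, ⟨hv, rfl⟩, ⟨hw, rfl⟩ => exact hv.dateLe_iff_dayNumber_le hw

theorem ValidDate.hasDayNumber_addDays {y m d : ℤ} (h : ValidDate y m d) (n : ℤ) :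
    (addDays y m d n).HasDayNumber (dayNumber y m d + n) := by
  fun_induction addDays y m d n with
  | case1 y m d n hm _ hdn =>
    exact ⟨⟨hm.1, hm.2, hdn⟩, by unfold dayNumber; ring⟩
  | case2 y m d n hm _ _ _ y' m' _ hnext ih =>
    obtain ⟨_, _, heq, hfirst, hnum⟩ := exists_addMonths_one_eq y 1 hm
    cases hnext.symm.trans heq
    convert ih hfirst using 1
    unfold dayNumber at *
    omega
  | case3 y m d n hm _ _ _ hnext =>
    obtain ⟨_, _, heq, -⟩ := exists_addMonths_one_eq y 1 hm
    cases hnext.symm.trans heq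
  | case4 y m d n hm _ _ _ _ ih =>
    convert ih (validDate_first y hm) using 1
    unfold dayNumber
    ring
  | case5 y m d n hm hd _ _ hd1 y' m' _ hprev ih =>
    obtain ⟨_, _, heq, hfirst, hnum⟩ := exists_addMonths_neg_one_eq y 1 hm
    cases hprev.symm.trans heq
    convert ih hfirst using 1
    unfold dayNumber at *
    omega
  | case6 y m d n hm _ _ _ _ hprev =>
    obtain ⟨_, _, heq, -⟩ := exists_addMonths_neg_one_eq y 1 hm
    cases hprev.symm.trans heq
  | case7 y m d _ _ hd => exact hd h.2.2
  | case8 y m d _ hm => exact hm ⟨h.1, h.2.1⟩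

theorem DValue.HasDayNumber.addD {v : DValue} {k : ℤ} (hv : v.HasDayNumber k) (n : ℤ) :
    (v.addD n).HasDayNumber (k + n) := by
  match v, k, hv with
  | .date .., _, ⟨hv, rfl⟩ => exact hv.hasDayNumber_addDays n

theorem ValidDate.hasDayNumber_rnd {y m d : ℤ} (h : ValidDate y m d) (r : RMode) :
    (rnd r (.date y m d)).HasDayNumber (dayNumber y m d) := by
  simp only [rnd, if_pos h.2.2]
  exact ⟨h, rfl⟩

theorem hasDayNumber_rnd_down_of_nbDays_lt {y m d : ℤ} (hm : 1 ≤ m ∧ m ≤ 12)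
    (hd : nbDays y m < d) :
    (rnd .down (.date y m d)).HasDayNumber (dayNumber y m (nbDays y m)) := by
  have := nbDays_bounds y m
  rw [rnd, if_neg (by omega), if_neg (by omega)]
  exact ⟨validDate_last y hm, rfl⟩

theorem hasDayNumber_rnd_up_of_nbDays_lt {y m d : ℤ} (hm : 1 ≤ m ∧ m ≤ 12)
    (hd : nbDays y m < d) :
    (rnd .up (.date y m d)).HasDayNumber (dayNumber y m (nbDays y m) + 1) := by
  have := nbDays_bounds y m
  obtain ⟨y', m', heq, hfirst, hnum⟩ := exists_addMonths_one_eq y d hm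
  simp only [rnd, heq]
  rw [if_neg (by omega), if_neg (by omega)]
  exact ⟨hfirst, hnum⟩

theorem exists_hasDayNumber_rnd_down_le_rnd_up (y : ℤ) {m d : ℤ} (hm : 1 ≤ m ∧ m ≤ 12)
    (hd : 1 ≤ d) :
    ∃ k l, (rnd .down (.date y m d)).HasDayNumber k ∧ (rnd .up (.date y m d)).HasDayNumber l ∧
      k ≤ l := by
  rcases le_or_gt d (nbDays y m) with hle | hlt
  · have hvalid : ValidDate y m d := ⟨hm.1, hm.2, hd, hle⟩
    exact ⟨_, _, hvalid.hasDayNumber_rnd .down, hvalid.hasDayNumber_rnd .up, le_rfl⟩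
  · exact ⟨_, _, hasDayNumber_rnd_down_of_nbDays_lt hm hlt,
      hasDayNumber_rnd_up_of_nbDays_lt hm hlt, (lt_add_one _).le⟩

/-- **Rounding comparison**: for every valid date `D` and every period
`p = (py, pm, pd)`, one has `D +↓ p ≤ D +↑ p`. -/
theorem rounding_comparison (y m d : ℤ) (p : Period) (h : ValidDate y m d) :
    DValue.le (addPeriod RMode.down (DValue.date y m d) p)
      (addPeriod RMode.up (DValue.date y m d) p) := by
  obtain ⟨hm1, hm12, hd, -⟩ := h
  obtain ⟨y', m', hmonths, hm', -⟩ := exists_addMonths_eq (y + p.py) d p.pm ⟨hm1, hm12⟩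
  obtain ⟨k, l, hdown, hup, hkl⟩ :=
    exists_hasDayNumber_rnd_down_le_rnd_up y' hm' hd
  simp only [addPeriod, DValue.addY, DValue.addM, hmonths]
  exact ((hdown.addD p.pd).le_iff (hup.addD p.pd)).2 (by gcongr)
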